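/- arXiv:1911.08040 — 2 statements merged into one kernel-verified Lean document; each statement's English description precedes it below -/
import Mathlib

section
/- Let n ≥ 1, M ≥ 0, let (Ω, P) be a probability space, and let z : Ω → ℝⁿ be a random vector with ‖z(ω)‖₂² ≤ M for P-almost every ω. Let Σ be the second moment matrix of z, i.e., the n×n matrix with entries Σ_{ij} = E[z_i z_j]. Then the matrix M • Σ − Σ² − E[(zzᵀ − Σ)²] is positive semidefinite; that is, E[(zzᵀ − Σ)²] ⪯ M Σ − Σ² in the Loewner order, where E[(zzᵀ − Σ)²] is the matrix whose (i,j) entry is the expectation of the (i,j) entry of (z(ω)z(ω)ᵀ − Σ)². -/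
/-!
Since `(zzᵀ)² = ‖z‖² zzᵀ` and `E[zzᵀ] = Σ`, expanding the square gives
`E[(zzᵀ − Σ)²] = E[‖z‖² zzᵀ] − Σ²`. Hence the matrix in question is
`M Σ − E[‖z‖² zzᵀ] = E[(M − ‖z‖²) zzᵀ]`, whose quadratic form at `x` is
`E[(M − ‖z‖²) ⟨x, z⟩²] ≥ 0`. The almost sure bound on `z` makes every entry integrable.
-/

open MeasureTheory Matrix

/-- The Euclidean (ℓ²) norm of a vector in ℝⁿ. -/
noncomputable def l2norm {n : ℕ} (v : Fin n → ℝ) : ℝ := Real.sqrt (∑ i, v i ^ 2)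

lemma centered_outer_sq_apply {n : ℕ} (v : Fin n → ℝ) (S : Matrix (Fin n) (Fin n) ℝ)
    (i j : Fin n) :
    ((vecMulVec v v - S) ^ 2) i j =
      (∑ k, v k ^ 2) * (v i * v j) - ∑ k, (v i * v k) * S k j
        - ∑ k, S i k * (v k * v j) + (S ^ 2) i j := by
  simp only [pow_two, mul_apply, Matrix.sub_apply, vecMulVec_apply, Finset.sum_mul,
    ← Finset.sum_sub_distrib, ← Finset.sum_add_distrib]
  exact Finset.sum_congr rfl fun k _ => by ring

/-- Let `z` be a random vector with `‖z‖₂² ≤ M` almost surely and second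
moment matrix `Σ` (`Σ i j = E[z_i z_j]`). Then `E[(zzᵀ − Σ)²] ⪯ M Σ − Σ²` in the Loewner
order, i.e. `M • Σ − Σ² − E[(zzᵀ − Σ)²]` is positive semidefinite, where `E[(zzᵀ − Σ)²]`
is the entrywise expectation of the matrix `(zzᵀ − Σ)²`. -/
theorem second_moment_loewner_bound (n : ℕ) (hn : 1 ≤ n) (M : ℝ) (hM : 0 ≤ M)
    (Ω : Type) [MeasurableSpace Ω] (P : Measure Ω) [IsProbabilityMeasure P]
    (z : Ω → Fin n → ℝ) (hzmeas : Measurable z)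
    (hbound : ∀ᵐ ω ∂P, l2norm (z ω) ^ 2 ≤ M)
    (S : Matrix (Fin n) (Fin n) ℝ)
    (hS : ∀ i j, S i j = ∫ ω, z ω i * z ω j ∂P) :
    (M • S - S ^ 2 -
      Matrix.of (fun i j => ∫ ω, ((Matrix.vecMulVec (z ω) (z ω) - S) ^ 2) i j ∂P)).PosSemidef := by
  have hq : ∀ᵐ ω ∂P, ∑ k, z ω k ^ 2 ≤ M := by
    filter_upwards [hbound] with ω h
    rwa [l2norm, Real.sq_sqrt (Finset.sum_nonneg fun k _ => sq_nonneg _)] at h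
  have hm : ∀ i, Measurable fun ω => z ω i := fun i => (measurable_pi_apply i).comp hzmeas
  have habs : ∀ i j, ∀ᵐ ω ∂P, |z ω i * z ω j| ≤ M := by
    intro i j
    filter_upwards [hq] with ω h
    have h1 : ∀ k, z ω k ^ 2 ≤ M := fun k =>
      (Finset.single_le_sum (f := fun k => z ω k ^ 2) (fun k _ => sq_nonneg _)
        (Finset.mem_univ k)).trans h
    rw [abs_le]
    constructor <;>
      nlinarith [h1 i, h1 j, sq_nonneg (z ω i - z ω j), sq_nonneg (z ω i + z ω j)]
  have hint : ∀ i j, Integrable (fun ω => z ω i * z ω j) P := fun i j =>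
    Integrable.of_bound ((hm i).mul (hm j)).aestronglyMeasurable M (habs i j)
  have hint4 : ∀ i j, Integrable (fun ω => (∑ k, z ω k ^ 2) * (z ω i * z ω j)) P := by
    intro i j
    refine (hint i j).bdd_mul (c := M)
      (Finset.measurable_sum _ fun k _ => (hm k).pow_const 2).aestronglyMeasurable ?_
    filter_upwards [hq] with ω h
    rwa [Real.norm_of_nonneg (Finset.sum_nonneg fun k _ => sq_nonneg _)]
  have hintM : ∀ i j, Integrable (fun ω => (M - ∑ k, z ω k ^ 2) * (z ω i * z ω j)) P := by
    intro i j
    simp only [sub_mul]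
    exact ((hint i j).const_mul M).sub (hint4 i j)
  have hent : M • S - S ^ 2 -
      Matrix.of (fun i j => ∫ ω, ((Matrix.vecMulVec (z ω) (z ω) - S) ^ 2) i j ∂P) =
      Matrix.of (fun i j => ∫ ω, (M - ∑ k, z ω k ^ 2) * (z ω i * z ω j) ∂P) := by
    ext i j
    have hA : Integrable (fun ω => ∑ k, (z ω i * z ω k) * S k j) P :=
      integrable_finsetSum _ fun k _ => (hint i k).mul_const _
    have hB : Integrable (fun ω => ∑ k, S i k * (z ω k * z ω j)) P :=
      integrable_finsetSum _ fun k _ => (hint k j).const_mul _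
    have eA : ∫ ω, ∑ k, (z ω i * z ω k) * S k j ∂P = (S ^ 2) i j := by
      rw [integral_finsetSum _ fun k _ => (hint i k).mul_const _, pow_two, mul_apply]
      exact Finset.sum_congr rfl fun k _ => by rw [integral_mul_const, ← hS]
    have eB : ∫ ω, ∑ k, S i k * (z ω k * z ω j) ∂P = (S ^ 2) i j := by
      rw [integral_finsetSum _ fun k _ => (hint k j).const_mul _, pow_two, mul_apply]
      exact Finset.sum_congr rfl fun k _ => by rw [integral_const_mul, ← hS]
    have hCA : Integrable (fun ω => (∑ k, z ω k ^ 2) * (z ω i * z ω j)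
        - ∑ k, (z ω i * z ω k) * S k j) P := (hint4 i j).sub hA
    have hCB : Integrable (fun ω => (∑ k, z ω k ^ 2) * (z ω i * z ω j)
        - ∑ k, (z ω i * z ω k) * S k j - ∑ k, S i k * (z ω k * z ω j)) P := hCA.sub hB
    simp only [Matrix.sub_apply, Matrix.smul_apply, of_apply, smul_eq_mul, centered_outer_sq_apply, sub_mul]
    rw [integral_add hCB (integrable_const _),
      integral_sub hCA hB, integral_sub (hint4 i j) hA,
      integral_sub ((hint i j).const_mul M) (hint4 i j), integral_const_mul, ← hS, eA, eB]
    simp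
  rw [hent]
  refine PosSemidef.of_dotProduct_mulVec_nonneg ?_ fun x => ?_
  · ext i j
    simp only [conjTranspose_apply, of_apply, star_trivial, mul_comm (z _ j)]
  · have hform : star x ⬝ᵥ (Matrix.of (fun i j =>
        ∫ ω, (M - ∑ k, z ω k ^ 2) * (z ω i * z ω j) ∂P) *ᵥ x) =
        ∫ ω, (M - ∑ k, z ω k ^ 2) * (∑ i, x i * z ω i) ^ 2 ∂P := by
      have hexp : ∀ ω, (M - ∑ k, z ω k ^ 2) * (∑ i, x i * z ω i) ^ 2 =
          ∑ i, ∑ j, x i * (((M - ∑ k, z ω k ^ 2) * (z ω i * z ω j)) * x j) := by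
        intro ω
        rw [pow_two, Finset.sum_mul_sum, Finset.mul_sum]
        refine Finset.sum_congr rfl fun i _ => ?_
        rw [Finset.mul_sum]
        exact Finset.sum_congr rfl fun j _ => by ring
      simp only [hexp]
      rw [integral_finsetSum _ fun i _ => integrable_finsetSum _ fun j _ =>
        ((hintM i j).mul_const _).const_mul _]
      simp only [dotProduct, mulVec, star_trivial, of_apply]
      refine Finset.sum_congr rfl fun i _ => ?_
      rw [integral_finsetSum _ fun j _ => ((hintM i j).mul_const _).const_mul _, Finset.mul_sum]
      exact Finset.sum_congr rfl fun j _ => by rw [integral_const_mul, integral_mul_const]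
    rw [hform]
    refine integral_nonneg_of_ae ?_
    filter_upwards [hq] with ω h
    exact mul_nonneg (sub_nonneg.2 h) (sq_nonneg _)
end

section
/- Let n ≥ 1, N ≥ 1, M ≥ 0, let (Ω, P) be a probability space, and let z : Ω → ℝⁿ be a random vector with ‖z(ω)‖₂² ≤ M for P-almost every ω. Let Σ be its second moment matrix, Σ_{ij} = E[z_i z_j]. Then the ℓ²→ℓ² operator norm of (1/N) • E[(zzᵀ − Σ)²] is at most (M ‖Σ‖ + ‖Σ‖²)/N, where ‖Σ‖ is the ℓ²→ℓ² operator norm of Σ and E[(zzᵀ − Σ)²] is the matrix whose (i,j) entry is the expectation of the (i,j) entry of (z(ω)z(ω)ᵀ − Σ)². -/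
/-!
Write `A = E[‖z‖² zzᵀ]`. Since `(zzᵀ)² = ‖z‖² zzᵀ` and `E[zzᵀ] = S`, expanding the square gives
`E[(zzᵀ - S)²] = A - S²`, so by the triangle inequality and submultiplicativity it is enough to
prove `‖A‖ ≤ M ‖S‖`. This follows by bounding the bilinear form of `A`: almost surely
`‖z‖² ⟨x, z⟩ ⟨z, y⟩ ≤ M (⟨x, z⟩² + ⟨y, z⟩²) / 2`, and the expectation of the right-hand side is
`M (xᵀ S x + yᵀ S y) / 2 ≤ M ‖S‖ (‖x‖² + ‖y‖²) / 2`.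
-/

open MeasureTheory Matrix

/-- The ℓ²→ℓ² operator norm (spectral norm) of an n×n real matrix: the operator norm of
the associated continuous linear map on Euclidean space. -/
noncomputable def matrixOpNorm {n : ℕ} (A : Matrix (Fin n) (Fin n) ℝ) : ℝ :=
  ‖LinearMap.toContinuousLinearMap (Matrix.toEuclideanLin A)‖

open scoped Matrix.Norms.L2Operator in
lemma matrixOpNorm_eq_norm {n : ℕ} (A : Matrix (Fin n) (Fin n) ℝ) : matrixOpNorm A = ‖A‖ := rfl

lemma dotProduct_self_eq_norm_sq {n : ℕ} (x : Fin n → ℝ) :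
    x ⬝ᵥ x = ‖WithLp.toLp 2 x‖ ^ 2 := by
  rw [EuclideanSpace.norm_sq_eq]
  simp [dotProduct, sq]

lemma dotProduct_mulVec_self_le {n : ℕ} (S : Matrix (Fin n) (Fin n) ℝ) (x : Fin n → ℝ) :
    x ⬝ᵥ S *ᵥ x ≤ matrixOpNorm S * (x ⬝ᵥ x) := by
  have h1 : x ⬝ᵥ S *ᵥ x = inner ℝ (WithLp.toLp 2 x) (WithLp.toLp 2 (S *ᵥ x)) := by
    simp [PiLp.inner_apply, dotProduct, mul_comm]
  have h2 : ‖WithLp.toLp 2 (S *ᵥ x)‖ ≤ matrixOpNorm S * ‖WithLp.toLp 2 x‖ :=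
    (LinearMap.toContinuousLinearMap (Matrix.toEuclideanLin S)).le_opNorm (WithLp.toLp 2 x)
  rw [h1, dotProduct_self_eq_norm_sq]
  calc _ ≤ ‖WithLp.toLp 2 x‖ * ‖WithLp.toLp 2 (S *ᵥ x)‖ := real_inner_le_norm _ _
    _ ≤ ‖WithLp.toLp 2 x‖ * (matrixOpNorm S * ‖WithLp.toLp 2 x‖) := by gcongr
    _ = _ := by ring

/-- A bound on the bilinear form by the arithmetic mean of `‖x‖²` and `‖y‖²` bounds the operator
norm: rescaling `x` to have the length of `y` turns the arithmetic mean into `‖x‖ ‖y‖`. -/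
lemma matrixOpNorm_le_of_bilin {n : ℕ} (A : Matrix (Fin n) (Fin n) ℝ) {C : ℝ} (hC : 0 ≤ C)
    (h : ∀ x y : Fin n → ℝ, x ⬝ᵥ A *ᵥ y ≤ C * ((x ⬝ᵥ x + y ⬝ᵥ y) / 2)) :
    matrixOpNorm A ≤ C := by
  refine ContinuousLinearMap.opNorm_le_bound _ hC fun v => ?_
  set y : Fin n → ℝ := WithLp.ofLp v
  have hy : v = WithLp.toLp 2 y := rfl
  change ‖WithLp.toLp 2 (A *ᵥ y)‖ ≤ C * ‖v‖
  rw [hy]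
  set w := A *ᵥ y with hw
  set a := ‖WithLp.toLp 2 y‖ with ha
  set b := ‖WithLp.toLp 2 w‖ with hb
  have ha0 : 0 ≤ a := norm_nonneg _
  have hb0 : 0 ≤ b := norm_nonneg _
  rcases hb0.eq_or_lt with hb1 | hb1
  · rw [← hb1]; positivity
  rcases ha0.eq_or_lt with ha1 | ha1
  · exfalso
    have hy0 : y = 0 := by
      have := norm_eq_zero.mp (ha.symm.trans ha1.symm)
      simpa using this
    rw [hb, hw, hy0] at hb1
    simp at hb1
  have key := h ((a / b) • w) y
  simp only [smul_dotProduct, dotProduct_smul, ← hw, smul_eq_mul] at key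
  rw [dotProduct_self_eq_norm_sq, dotProduct_self_eq_norm_sq, ← ha, ← hb] at key
  have e1 : a / b * b ^ 2 = a * b := by field_simp
  have e2 : a / b * (a * b) = a * a := by field_simp
  rw [e1, e2] at key
  nlinarith

/-- Expectation turns the square of a linear functional of `z` into the quadratic form of `S`. -/
lemma integral_dotProduct_sq {n : ℕ} {Ω : Type} [MeasurableSpace Ω] {P : Measure Ω}
    {z : Ω → Fin n → ℝ} {S : Matrix (Fin n) (Fin n) ℝ}
    (hint : ∀ i j, Integrable (fun ω => z ω i * z ω j) P)
    (hS : ∀ i j, S i j = ∫ ω, z ω i * z ω j ∂P) (x : Fin n → ℝ) :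
    Integrable (fun ω => (x ⬝ᵥ z ω) ^ 2) P ∧ ∫ ω, (x ⬝ᵥ z ω) ^ 2 ∂P = x ⬝ᵥ S *ᵥ x := by
  have e : (fun ω => (x ⬝ᵥ z ω) ^ 2) =
      fun ω => ∑ i, ∑ j, x i * x j * (z ω i * z ω j) := by
    funext ω
    simp only [dotProduct, sq, Finset.sum_mul_sum]
    exact Finset.sum_congr rfl fun i _ => Finset.sum_congr rfl fun j _ => by ring
  have hi : ∀ i j, Integrable (fun ω => x i * x j * (z ω i * z ω j)) P :=
    fun i j => (hint i j).const_mul _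
  rw [e]
  refine ⟨integrable_finsetSum _ fun i _ => integrable_finsetSum _ fun j _ => hi i j, ?_⟩
  rw [integral_finsetSum _ fun i _ => integrable_finsetSum _ fun j _ => hi i j]
  simp only [dotProduct, mulVec, Finset.mul_sum]
  refine Finset.sum_congr rfl fun i _ => ?_
  rw [integral_finsetSum _ fun j _ => hi i j]
  refine Finset.sum_congr rfl fun j _ => ?_
  rw [integral_const_mul, hS]
  ring

/-- The fourth-moment matrix `E[‖z‖² zzᵀ]` has operator norm at most `M ‖S‖`. -/
lemma matrixOpNorm_fourth_moment_le {n : ℕ} {Ω : Type} [MeasurableSpace Ω] {P : Measure Ω}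
    {z : Ω → Fin n → ℝ} {S : Matrix (Fin n) (Fin n) ℝ} {M : ℝ} (hM : 0 ≤ M)
    (hb : ∀ᵐ ω ∂P, z ω ⬝ᵥ z ω ≤ M)
    (hint : ∀ i j, Integrable (fun ω => z ω i * z ω j) P)
    (hint4 : ∀ i j, Integrable (fun ω => (z ω ⬝ᵥ z ω) * (z ω i * z ω j)) P)
    (hS : ∀ i j, S i j = ∫ ω, z ω i * z ω j ∂P) :
    matrixOpNorm (Matrix.of fun i j => ∫ ω, (z ω ⬝ᵥ z ω) * (z ω i * z ω j) ∂P)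
      ≤ M * matrixOpNorm S := by
  have hS0 : 0 ≤ matrixOpNorm S := norm_nonneg _
  refine matrixOpNorm_le_of_bilin _ (by positivity) fun x y => ?_
  have hi : ∀ i j, Integrable (fun ω => x i * y j * ((z ω ⬝ᵥ z ω) * (z ω i * z ω j))) P :=
    fun i j => (hint4 i j).const_mul _
  have e : (fun ω => (z ω ⬝ᵥ z ω) * ((x ⬝ᵥ z ω) * (y ⬝ᵥ z ω))) =
      fun ω => ∑ i, ∑ j, x i * y j * ((z ω ⬝ᵥ z ω) * (z ω i * z ω j)) := by
    funext ω
    generalize z ω ⬝ᵥ z ω = c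
    simp only [dotProduct, Finset.sum_mul_sum]
    simp only [Finset.mul_sum]
    exact Finset.sum_congr rfl fun i _ => Finset.sum_congr rfl fun j _ => by ring
  have hI : Integrable (fun ω => (z ω ⬝ᵥ z ω) * ((x ⬝ᵥ z ω) * (y ⬝ᵥ z ω))) P := by
    rw [e]
    exact integrable_finsetSum _ fun i _ => integrable_finsetSum _ fun j _ => hi i j
  have hform : x ⬝ᵥ (Matrix.of fun i j => ∫ ω, (z ω ⬝ᵥ z ω) * (z ω i * z ω j) ∂P) *ᵥ y =
      ∫ ω, (z ω ⬝ᵥ z ω) * ((x ⬝ᵥ z ω) * (y ⬝ᵥ z ω)) ∂P := by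
    rw [e, integral_finsetSum _ fun i _ => integrable_finsetSum _ fun j _ => hi i j]
    rw [dotProduct]
    refine Finset.sum_congr rfl fun i _ => ?_
    rw [integral_finsetSum _ fun j _ => hi i j, mulVec, dotProduct, Finset.mul_sum]
    refine Finset.sum_congr rfl fun j _ => ?_
    rw [integral_const_mul, Matrix.of_apply]
    ring
  obtain ⟨ix, ex⟩ := integral_dotProduct_sq hint hS x
  obtain ⟨iy, ey⟩ := integral_dotProduct_sq hint hS y
  rw [hform]
  calc _ ≤ ∫ ω, M / 2 * ((x ⬝ᵥ z ω) ^ 2 + (y ⬝ᵥ z ω) ^ 2) ∂P := by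
        refine integral_mono_ae hI ((ix.add iy).const_mul _) ?_
        filter_upwards [hb] with ω hω
        have h0 : 0 ≤ z ω ⬝ᵥ z ω := by rw [dotProduct_self_eq_norm_sq]; positivity
        have h1 := mul_le_mul_of_nonneg_left
          (two_mul_le_add_sq (x ⬝ᵥ z ω) (y ⬝ᵥ z ω)) h0
        have h2 := mul_le_mul_of_nonneg_right hω
          (add_nonneg (sq_nonneg (x ⬝ᵥ z ω)) (sq_nonneg (y ⬝ᵥ z ω)))
        linarith
    _ = M / 2 * (x ⬝ᵥ S *ᵥ x + y ⬝ᵥ S *ᵥ y) := by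
        rw [integral_const_mul, integral_add ix iy, ex, ey]
    _ ≤ M / 2 * (matrixOpNorm S * (x ⬝ᵥ x) + matrixOpNorm S * (y ⬝ᵥ y)) := by
        gcongr <;> exact dotProduct_mulVec_self_le _ _
    _ = _ := by ring

lemma vecMulVec_sub_sq_apply {n : ℕ} (v : Fin n → ℝ) (S : Matrix (Fin n) (Fin n) ℝ)
    (i j : Fin n) :
    ((Matrix.vecMulVec v v - S) ^ 2) i j =
      (v ⬝ᵥ v) * (v i * v j) - ∑ k, (v i * v k) * S k j - ∑ k, S i k * (v k * v j)
        + ∑ k, S i k * S k j := by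
  simp only [sq, Matrix.mul_apply, Matrix.sub_apply, vecMulVec_apply, dotProduct,
    Finset.sum_mul, ← Finset.sum_sub_distrib, ← Finset.sum_add_distrib]
  exact Finset.sum_congr rfl fun k _ => by ring

/-- The variance identity `E[(zzᵀ - S)²] = E[‖z‖² zzᵀ] - S²`. -/
lemma integral_sub_sq {n : ℕ} {Ω : Type} [MeasurableSpace Ω] {P : Measure Ω}
    [IsProbabilityMeasure P] {z : Ω → Fin n → ℝ} {S : Matrix (Fin n) (Fin n) ℝ}
    (hint : ∀ i j, Integrable (fun ω => z ω i * z ω j) P)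
    (hint4 : ∀ i j, Integrable (fun ω => (z ω ⬝ᵥ z ω) * (z ω i * z ω j)) P)
    (hS : ∀ i j, S i j = ∫ ω, z ω i * z ω j ∂P) :
    (Matrix.of fun i j => ∫ ω, ((Matrix.vecMulVec (z ω) (z ω) - S) ^ 2) i j ∂P) =
      (Matrix.of fun i j => ∫ ω, (z ω ⬝ᵥ z ω) * (z ω i * z ω j) ∂P) - S * S := by
  ext i j
  have i1 : ∀ k, Integrable (fun ω => z ω i * z ω k * S k j) P :=
    fun k => (hint i k).mul_const _
  have i2 : ∀ k, Integrable (fun ω => S i k * (z ω k * z ω j)) P :=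
    fun k => (hint k j).const_mul _
  have j1 := integrable_finsetSum Finset.univ fun k _ => i1 k
  have j2 := integrable_finsetSum Finset.univ fun k _ => i2 k
  simp only [Matrix.of_apply, Matrix.sub_apply, vecMulVec_sub_sq_apply, Matrix.mul_apply]
  have k1 : Integrable (fun ω => (z ω ⬝ᵥ z ω) * (z ω i * z ω j)
      - ∑ k, z ω i * z ω k * S k j) P := (hint4 i j).sub j1
  have k2 : Integrable (fun ω => (z ω ⬝ᵥ z ω) * (z ω i * z ω j)
      - ∑ k, z ω i * z ω k * S k j - ∑ k, S i k * (z ω k * z ω j)) P := k1.sub j2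
  rw [integral_add k2 (integrable_const _), integral_sub k1 j2, integral_sub (hint4 i j) j1,
    integral_finsetSum _ fun k _ => i1 k, integral_finsetSum _ fun k _ => i2 k]
  simp only [integral_mul_const, integral_const_mul, ← hS, integral_const, probReal_univ,
    one_smul]
  ring

/-- Let `z` be a random vector with `‖z‖₂² ≤ M` almost surely and second
moment matrix `Σ` (`Σ i j = E[z_i z_j]`). Then the spectral norm of
`(1/N) • E[(zzᵀ − Σ)²]` is at most `(M ‖Σ‖ + ‖Σ‖²)/N`, where `E[(zzᵀ − Σ)²]` is the
entrywise expectation of the matrix `(zzᵀ − Σ)²`. -/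
theorem variance_opNorm_bound (n N : ℕ) (hn : 1 ≤ n) (hN : 1 ≤ N) (M : ℝ) (hM : 0 ≤ M)
    (Ω : Type) [MeasurableSpace Ω] (P : Measure Ω) [IsProbabilityMeasure P]
    (z : Ω → Fin n → ℝ) (hzmeas : Measurable z)
    (hbound : ∀ᵐ ω ∂P, l2norm (z ω) ^ 2 ≤ M)
    (S : Matrix (Fin n) (Fin n) ℝ)
    (hS : ∀ i j, S i j = ∫ ω, z ω i * z ω j ∂P) :
    matrixOpNorm ((1 / (N : ℝ)) •
        Matrix.of (fun i j => ∫ ω, ((Matrix.vecMulVec (z ω) (z ω) - S) ^ 2) i j ∂P))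
      ≤ (M * matrixOpNorm S + matrixOpNorm S ^ 2) / N := by
  have hnorm : ∀ v : Fin n → ℝ, l2norm v ^ 2 = v ⬝ᵥ v := fun v => by
    rw [l2norm, Real.sq_sqrt (by positivity)]
    simp [dotProduct, sq]
  simp only [hnorm] at hbound
  have hm : ∀ i, Measurable fun ω => z ω i := fun i => (measurable_pi_apply i).comp hzmeas
  have hprod : ∀ i j, ∀ᵐ ω ∂P, |z ω i * z ω j| ≤ M := fun i j => by
    filter_upwards [hbound] with ω hω
    have hc : ∀ k, z ω k ^ 2 ≤ M := fun k => by
      refine le_trans ?_ hω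
      rw [dotProduct, sq]
      exact Finset.single_le_sum (f := fun k => z ω k * z ω k)
        (fun k _ => mul_self_nonneg _) (Finset.mem_univ k)
    rw [abs_le]
    constructor <;> nlinarith [hc i, hc j, sq_nonneg (z ω i - z ω j), sq_nonneg (z ω i + z ω j)]
  have hint : ∀ i j, Integrable (fun ω => z ω i * z ω j) P := fun i j =>
    Integrable.of_bound ((hm i).mul (hm j)).aestronglyMeasurable M (hprod i j)
  have hint4 : ∀ i j, Integrable (fun ω => (z ω ⬝ᵥ z ω) * (z ω i * z ω j)) P := fun i j => by
    have hmm : Measurable fun ω => z ω ⬝ᵥ z ω :=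
      Finset.measurable_fun_sum _ fun k _ => (hm k).mul (hm k)
    refine Integrable.of_bound (hmm.mul ((hm i).mul (hm j))).aestronglyMeasurable (M * M) ?_
    filter_upwards [hbound, hprod i j] with ω h1 h2
    have h0 : 0 ≤ z ω ⬝ᵥ z ω := by rw [dotProduct_self_eq_norm_sq]; positivity
    rw [Real.norm_eq_abs, abs_mul, abs_of_nonneg h0]
    gcongr
  have hA := matrixOpNorm_fourth_moment_le hM hbound hint hint4 hS
  rw [integral_sub_sq hint hint4 hS]
  set A : Matrix (Fin n) (Fin n) ℝ := Matrix.of fun i j => ∫ ω, (z ω ⬝ᵥ z ω) * (z ω i * z ω j) ∂P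
  open scoped Matrix.Norms.L2Operator in
  simp only [matrixOpNorm_eq_norm] at hA ⊢
  have hV : ‖A - S * S‖ ≤ M * ‖S‖ + ‖S‖ ^ 2 :=
    calc ‖A - S * S‖ ≤ ‖A‖ + ‖S * S‖ := norm_sub_le _ _
      _ ≤ M * ‖S‖ + ‖S‖ ^ 2 := by
        rw [sq]
        exact add_le_add hA (norm_mul_le _ _)
  rw [norm_smul, Real.norm_of_nonneg (by positivity), one_div, inv_mul_eq_div]
  gcongr
end
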